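/- arXiv:2403.12725 — 2 statements merged into one kernel-verified Lean document; each statement's English description precedes it below -/
import Mathlib

section
/- Let f be a discrete Morse function on a finite nonempty abstract simplicial complex K. Then every simplex at which f attains its minimum value over K is a 0-simplex (a vertex), and every such minimizing vertex is a critical simplex of f. In particular, f has at least one critical vertex. -/
/-- An abstract simplicial complex on a vertex type `V`: a set of nonempty finite
subsets (simplices) closed under passing to nonempty subsets. -/
def IsComplex {V : Type*} (K : Set (Finset V)) : Prop :=
  (∀ σ ∈ K, σ.Nonempty) ∧ ∀ σ ∈ K, ∀ τ : Finset V, τ ⊆ σ → τ.Nonempty → τ ∈ K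

/-- `α ⋖ β` : `α` is a codimension-one face of `β`. -/
def CodimOneFace {V : Type*} (a b : Finset V) : Prop :=
  a ⊆ b ∧ b.card = a.card + 1

/-- A discrete Morse function on `K`: for every simplex `σ ∈ K`, at most one
codimension-one coface with no larger value, and at most one codimension-one face
with no smaller value. -/
def IsDiscreteMorse {V : Type*} (K : Set (Finset V)) (f : Finset V → ℝ) : Prop :=
  ∀ σ ∈ K,
    {β | β ∈ K ∧ CodimOneFace σ β ∧ f β ≤ f σ}.Subsingleton ∧
    {a | a ∈ K ∧ CodimOneFace a σ ∧ f σ ≤ f a}.Subsingleton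

/-- A simplex `σ` is critical for `f` if both exceptional sets are empty. -/
def IsCriticalSimplex {V : Type*} (K : Set (Finset V)) (f : Finset V → ℝ)
    (σ : Finset V) : Prop :=
  σ ∈ K ∧
    {β | β ∈ K ∧ CodimOneFace σ β ∧ f β ≤ f σ} = ∅ ∧
    {a | a ∈ K ∧ CodimOneFace a σ ∧ f σ ≤ f a} = ∅

/-- A discrete vector field on `K`: a set of pairs `(α, β)` of simplices of `K`
with `α ⋖ β` such that each simplex belongs to at most one pair. -/
def IsDVF {V : Type*} (K : Set (Finset V)) (W : Set (Finset V × Finset V)) : Prop :=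
  (∀ p ∈ W, p.1 ∈ K ∧ p.2 ∈ K ∧ CodimOneFace p.1 p.2) ∧
  ∀ σ ∈ K, {p | p ∈ W ∧ (p.1 = σ ∨ p.2 = σ)}.Subsingleton

/-- The gradient vector field of a discrete Morse function `f` on `K`. -/
def gradVF {V : Type*} (K : Set (Finset V)) (f : Finset V → ℝ) :
    Set (Finset V × Finset V) :=
  {p | p.1 ∈ K ∧ p.2 ∈ K ∧ CodimOneFace p.1 p.2 ∧ f p.2 ≤ f p.1}

/-- A `V`-path `α_0, β_0, α_1, …, β_{r-1}, α_r` for a discrete vector field `W`. -/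
def IsVPath {V : Type*} (K : Set (Finset V)) (W : Set (Finset V × Finset V)) {r : ℕ}
    (a : Fin (r + 1) → Finset V) (b : Fin r → Finset V) : Prop :=
  (∀ i, a i ∈ K) ∧ (∀ i, b i ∈ K) ∧
  ∀ i : Fin r, (a i.castSucc, b i) ∈ W ∧ CodimOneFace (a i.succ) (b i) ∧
    a i.succ ≠ a i.castSucc

/-- `W` admits no nontrivial closed `V`-path. -/
def NoClosedVPath {V : Type*} (K : Set (Finset V))
    (W : Set (Finset V × Finset V)) : Prop :=
  ∀ r : ℕ, 0 < r → ∀ a : Fin (r + 1) → Finset V, ∀ b : Fin r → Finset V,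
    IsVPath K W a b → a (Fin.last r) ≠ a 0

section CodimOneFaces

variable {V : Type*} {K : Set (Finset V)} {σ : Finset V}

theorem codimOneFace_erase [DecidableEq V] {v : V} (hv : v ∈ σ) :
    CodimOneFace (σ.erase v) σ :=
  ⟨σ.erase_subset v, (Finset.card_erase_add_one hv).symm⟩

theorem IsComplex.erase_mem [DecidableEq V] (hK : IsComplex K) (hσ : σ ∈ K)
    (hnt : σ.Nontrivial) (v : V) : σ.erase v ∈ K :=
  hK.2 σ hσ _ (σ.erase_subset v) hnt.erase_nonempty

theorem IsComplex.nontrivial_codimOneFaces (hK : IsComplex K) (hσ : σ ∈ K)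
    (hnt : σ.Nontrivial) : {α | α ∈ K ∧ CodimOneFace α σ}.Nontrivial := by
  classical
  have erase_mem_faces : ∀ v ∈ σ, σ.erase v ∈ {α | α ∈ K ∧ CodimOneFace α σ} :=
    fun v hv => ⟨hK.erase_mem hσ hnt v, codimOneFace_erase hv⟩
  obtain ⟨v, hv, w, hw, hvw⟩ := hnt
  exact ⟨σ.erase v, erase_mem_faces v hv, σ.erase w, erase_mem_faces w hw,
    σ.erase_injOn.ne hv hw hvw⟩

theorem IsComplex.not_codimOneFace_of_card_eq_one {α : Finset V} (hK : IsComplex K)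
    (hα : α ∈ K) (hσ : σ.card = 1) : ¬ CodimOneFace α σ := by
  rintro ⟨-, hcard⟩
  have hpos := (hK.1 α hα).card_pos
  omega

end CodimOneFaces

section ExceptionalSets

variable {V R : Type*}

/-- The codimension-one cofaces of `σ` on which `f` fails to increase. The values lie in an
arbitrary ordered type; for `R = ℝ` this is the first set in `IsDiscreteMorse`. -/
def exceptionalCofaces [LE R] (K : Set (Finset V)) (f : Finset V → R) (σ : Finset V) :
    Set (Finset V) :=
  {β | β ∈ K ∧ CodimOneFace σ β ∧ f β ≤ f σ}

/-- The codimension-one faces of `σ` on which `f` fails to decrease. The values lie in an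
arbitrary ordered type; for `R = ℝ` this is the second set in `IsDiscreteMorse`. -/
def exceptionalFaces [LE R] (K : Set (Finset V)) (f : Finset V → R) (σ : Finset V) :
    Set (Finset V) :=
  {α | α ∈ K ∧ CodimOneFace α σ ∧ f σ ≤ f α}

/-- Criticality of `σ` for a function with values in an arbitrary ordered type; for `R = ℝ` it
unfolds to `IsCriticalSimplex`. -/
def IsOrderCritical [LE R] (K : Set (Finset V)) (f : Finset V → R) (σ : Finset V) : Prop :=
  σ ∈ K ∧ exceptionalCofaces K f σ = ∅ ∧ exceptionalFaces K f σ = ∅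

variable {K : Set (Finset V)} {σ : Finset V}

theorem IsComplex.card_eq_one_of_le_codimOneFaces [LE R] {f : Finset V → R} (hK : IsComplex K)
    (hσ : σ ∈ K) (hf : (exceptionalFaces K f σ).Subsingleton)
    (hmin : ∀ α ∈ K, CodimOneFace α σ → f σ ≤ f α) : σ.card = 1 := by
  have faces_subset : {α | α ∈ K ∧ CodimOneFace α σ} ⊆ exceptionalFaces K f σ :=
    fun α ⟨hα, hface⟩ => ⟨hα, hface, hmin α hα hface⟩
  have not_nontrivial : ¬ σ.Nontrivial := fun hnt =>
    Set.not_subsingleton_iff.mpr (hK.nontrivial_codimOneFaces hσ hnt) (hf.anti faces_subset)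
  rw [← Finset.one_lt_card_iff_nontrivial, not_lt] at not_nontrivial
  exact not_nontrivial.antisymm (hK.1 σ hσ).card_pos

theorem IsComplex.isOrderCritical_of_forall_le [Preorder R] {f : Finset V → R}
    (hK : IsComplex K) (hf : ∀ τ ∈ K, (exceptionalFaces K f τ).Subsingleton) (hσ : σ ∈ K)
    (hmin : ∀ τ ∈ K, f σ ≤ f τ) : IsOrderCritical K f σ := by
  have minimizer_card : ∀ τ ∈ K, f τ ≤ f σ → τ.card = 1 := fun τ hτ hle =>
    hK.card_eq_one_of_le_codimOneFaces hτ (hf τ hτ) fun α hα _ => hle.trans (hmin α hα)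
  refine ⟨hσ, Set.eq_empty_of_forall_notMem ?_, Set.eq_empty_of_forall_notMem ?_⟩
  · rintro β ⟨hβ, hface, hle⟩
    exact hK.not_codimOneFace_of_card_eq_one hσ (minimizer_card β hβ hle) hface
  · rintro α ⟨hα, hface, -⟩
    exact hK.not_codimOneFace_of_card_eq_one hα (minimizer_card σ hσ le_rfl) hface

end ExceptionalSets

theorem exists_forall_le_of_isWF_image {ι R : Type*} [LinearOrder R] {s : Set ι} {f : ι → R}
    (hwf : (f '' s).IsWF) (hs : s.Nonempty) : ∃ i ∈ s, ∀ j ∈ s, f i ≤ f j := by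
  obtain ⟨i, hi, hfi⟩ := hwf.min_mem (hs.image f)
  exact ⟨i, hi, fun j hj => hfi.trans_le (hwf.min_le _ (Set.mem_image_of_mem f hj))⟩

theorem min_simplex_is_critical_vertex_general {V R : Type*} [LinearOrder R]
    (K : Set (Finset V)) (hK : IsComplex K) (hne : K.Nonempty) (f : Finset V → R)
    (hwf : (f '' K).IsWF) (hf : ∀ σ ∈ K, (exceptionalFaces K f σ).Subsingleton) :
    (∀ σ ∈ K, (∀ τ ∈ K, f σ ≤ f τ) → σ.card = 1 ∧ IsOrderCritical K f σ) ∧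
    (∃ σ ∈ K, σ.card = 1 ∧ IsOrderCritical K f σ) := by
  have critical_vertex_of_min :
      ∀ σ ∈ K, (∀ τ ∈ K, f σ ≤ f τ) → σ.card = 1 ∧ IsOrderCritical K f σ := fun σ hσ hmin =>
    ⟨hK.card_eq_one_of_le_codimOneFaces hσ (hf σ hσ) fun α hα _ => hmin α hα,
      hK.isOrderCritical_of_forall_le hf hσ hmin⟩
  obtain ⟨σ, hσ, hmin⟩ := exists_forall_le_of_isWF_image hwf hne
  exact ⟨critical_vertex_of_min, σ, hσ, critical_vertex_of_min σ hσ hmin⟩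

/-- every simplex at which a discrete Morse function on a finite
nonempty complex attains its minimum over `K` is a vertex, and is critical;
in particular there is at least one critical vertex. -/
theorem min_simplex_is_critical_vertex {V : Type*} (K : Set (Finset V))
    (hK : IsComplex K) (hfin : K.Finite) (hne : K.Nonempty)
    (f : Finset V → ℝ) (hf : IsDiscreteMorse K f) :
    (∀ σ ∈ K, (∀ τ ∈ K, f σ ≤ f τ) → σ.card = 1 ∧ IsCriticalSimplex K f σ) ∧
    (∃ σ ∈ K, σ.card = 1 ∧ IsCriticalSimplex K f σ) := by
  exact min_simplex_is_critical_vertex_general K hK hne f (hfin.image f).isWF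
    fun σ hσ => (hf σ hσ).2
end

section
/- (Special case of Forman, Theorem 2.5) Let K be a finite abstract simplicial complex and let V be a gradient vector field on K (a discrete vector field admitting no nontrivial closed V-path) whose set of critical simplices (simplices belonging to no pair of V) consists of exactly one 0-simplex. Then K is collapsible: there is a finite sequence of elementary collapses reducing K to that single vertex, where an elementary collapse removes from the current complex a pair of simplices (α, β) with α ⋖ β such that β is the unique simplex of the current complex properly containing α. -/
/-- An elementary collapse: remove from the current complex a pair `(α, β)` with
`α ⋖ β` such that `β` is the unique simplex of the current complex properly
containing `α`. -/
def ElemCollapse {V : Type*} (K K' : Set (Finset V)) : Prop :=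
  ∃ a b : Finset V, a ∈ K ∧ b ∈ K ∧ CodimOneFace a b ∧
    (∀ τ ∈ K, a ⊂ τ → τ = b) ∧ K' = K \ {a, b}

/-!
Among the pairs of `W` whose larger simplex has maximal dimension, acyclicity provides a pair
`(a, b)` whose smaller simplex `a` is not reached by any `V`-path from another such pair. Then
`a` is a free face of `b`: a further coface of `a` is not critical, since the critical simplices
form a subcomplex; it is not the smaller simplex of a pair, by maximality of the dimension; and
it is not the larger simplex of a pair `(c, τ)`, since then `c, τ, a` would be a `V`-path.
Collapsing `(a, b)` leaves a gradient vector field with the same critical simplices, so induction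
on the number of pairs collapses `K` onto its subcomplex of critical simplices.
-/

theorem exists_relSeries_of_reflTransGen {α : Type*} {r : α → α → Prop} {x y : α}
    (h : Relation.ReflTransGen r x y) :
    ∃ s : RelSeries {p : α × α | r p.1 p.2}, s.head = x ∧ s.last = y := by
  induction h using Relation.ReflTransGen.head_induction_on with
  | refl => exact ⟨.singleton _ y, rfl, rfl⟩
  | head hxz _ ih =>
    obtain ⟨s, rfl, hs⟩ := ih
    exact ⟨s.cons _ hxz, rfl, (s.last_cons _ hxz).trans hs⟩

theorem exists_forall_not_rel_of_transGen_irrefl {α : Type*} {r : α → α → Prop} {S : Set α}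
    (hfin : S.Finite) (hne : S.Nonempty) (hr : ∀ a, ¬ Relation.TransGen r a a) :
    ∃ a ∈ S, ∀ c ∈ S, ¬ r c a := by
  have : IsStrictOrder α (Relation.TransGen r) :=
    { irrefl := hr, trans := fun _ _ _ => Relation.TransGen.trans }
  have hwf : S.WellFoundedOn (Relation.TransGen r) := hfin.wellFoundedOn
  obtain ⟨a, -, hmin⟩ := WellFounded.has_min hwf Set.univ ⟨⟨_, hne.some_mem⟩, trivial⟩
  exact ⟨a, a.2, fun c hc hca => hmin ⟨c, hc⟩ trivial (.single hca)⟩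

section DiscreteVectorField

variable {V : Type*} {K K' : Set (Finset V)} {W W' : Set (Finset V × Finset V)}

/-- The critical simplices of a discrete vector field `W` on `K`: those belonging to no pair
of `W`. -/
def criticalSimplices (K : Set (Finset V)) (W : Set (Finset V × Finset V)) : Set (Finset V) :=
  {σ | σ ∈ K ∧ ∀ p ∈ W, p.1 ≠ σ ∧ p.2 ≠ σ}

/-- One step `a, b, c` of a `V`-path, as a relation between `a` and `c`. Its cycles are the
nontrivial closed `V`-paths. -/
def VStep (W : Set (Finset V × Finset V)) (a c : Finset V) : Prop :=
  ∃ b, (a, b) ∈ W ∧ CodimOneFace c b ∧ c ≠ a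

theorem exists_pair_of_notMem_criticalSimplices {σ : Finset V} (hσ : σ ∈ K)
    (hcrit : σ ∉ criticalSimplices K W) : ∃ p ∈ W, p.1 = σ ∨ p.2 = σ := by
  by_contra! h
  exact hcrit ⟨hσ, h⟩

theorem IsDVF.finite (hW : IsDVF K W) (hK : K.Finite) : W.Finite :=
  (hK.prod hK).subset fun p hp => ⟨(hW.1 p hp).1, (hW.1 p hp).2.1⟩

theorem IsDVF.eq_of_common_simplex (hW : IsDVF K W) {p q : Finset V × Finset V}
    (hp : p ∈ W) (hq : q ∈ W) {σ : Finset V} (hpσ : p.1 = σ ∨ p.2 = σ)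
    (hqσ : q.1 = σ ∨ q.2 = σ) : p = q := by
  have hσ : σ ∈ K := by
    rcases hpσ with rfl | rfl
    exacts [(hW.1 p hp).1, (hW.1 p hp).2.1]
  exact hW.2 σ hσ ⟨hp, hpσ⟩ ⟨hq, hqσ⟩

theorem IsDVF.sdiff_pair (hW : IsDVF K W) {p : Finset V × Finset V} (hp : p ∈ W) :
    IsDVF (K \ {p.1, p.2}) (W \ {p}) := by
  refine ⟨fun q ⟨hq, hqp⟩ => ?_, fun σ hσ =>
    (hW.2 σ hσ.1).anti fun q ⟨hq, hqσ⟩ => ⟨hq.1, hqσ⟩⟩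
  have hdisj : ∀ σ, q.1 = σ ∨ q.2 = σ → σ ∉ ({p.1, p.2} : Set (Finset V)) := fun σ hqσ hpσ =>
    hqp (hW.eq_of_common_simplex hq hp hqσ (hpσ.imp Eq.symm Eq.symm))
  obtain ⟨h₁, h₂, hface⟩ := hW.1 q hq
  exact ⟨⟨h₁, hdisj _ (.inl rfl)⟩, ⟨h₂, hdisj _ (.inr rfl)⟩, hface⟩

theorem criticalSimplices_sdiff_pair {p : Finset V × Finset V} (hp : p ∈ W) :
    criticalSimplices (K \ {p.1, p.2}) (W \ {p}) = criticalSimplices K W := by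
  ext σ
  constructor
  · rintro ⟨⟨hσ, hσp⟩, hcrit⟩
    refine ⟨hσ, fun q hq => ?_⟩
    rcases eq_or_ne q p with rfl | hqp
    · exact ⟨fun h => hσp (.inl h.symm), fun h => hσp (.inr h.symm)⟩
    · exact hcrit q ⟨hq, hqp⟩
  · rintro ⟨hσ, hcrit⟩
    refine ⟨⟨hσ, ?_⟩, fun q hq => hcrit q hq.1⟩
    rintro (h | h)
    exacts [(hcrit p hp).1 h.symm, (hcrit p hp).2 h.symm]

theorem NoClosedVPath.anti (h : NoClosedVPath K W) (hK : K' ⊆ K) (hW : W' ⊆ W) :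
    NoClosedVPath K' W' := fun r hr a b hab =>
  h r hr a b ⟨fun i => hK (hab.1 i), fun i => hK (hab.2.1 i),
    fun i => ⟨hW (hab.2.2 i).1, (hab.2.2 i).2⟩⟩

theorem NoClosedVPath.transGen_vStep_irrefl (hnc : NoClosedVPath K W) (hW : IsDVF K W)
    (a : Finset V) : ¬ Relation.TransGen (VStep W) a a := by
  intro hcycle
  obtain ⟨c, hac, hca⟩ := Relation.TransGen.head'_iff.1 hcycle
  have haK : a ∈ K := by
    obtain ⟨_, hab, -⟩ := hac
    exact (hW.1 _ hab).1
  obtain ⟨s, rfl, hs⟩ := exists_relSeries_of_reflTransGen hca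
  let t := s.cons a hac
  have htlast : t.last = a := (s.last_cons a hac).trans hs
  have hstep : ∀ i : Fin t.length, ∃ b, (t i.castSucc, b) ∈ W ∧
    CodimOneFace (t i.succ) b ∧ t i.succ ≠ t i.castSucc := t.step
  choose b hb using hstep
  have hlastK : t.last ∈ K := by rwa [htlast]
  have htK : ∀ i, t i ∈ K := Fin.lastCases hlastK fun i => (hW.1 _ (hb i).1).1
  exact hnc t.length (by simp [t]) t b ⟨htK, fun i => (hW.1 _ (hb i).1).2.1, hb⟩ htlast

theorem IsDVF.exists_elemCollapse (hW : IsDVF K W) (hnc : NoClosedVPath K W) (hfin : W.Finite)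
    (hne : W.Nonempty) (hlower : IsRelLowerSet (criticalSimplices K W) (· ∈ K)) :
    ∃ p ∈ W, ElemCollapse K (K \ {p.1, p.2}) := by
  obtain ⟨m, hm, hmax⟩ := Set.exists_max_image W (fun p => p.2.card) hfin hne
  let S : Set (Finset V) := Prod.fst '' {p ∈ W | p.2.card = m.2.card}
  have hSfin : S.Finite := (hfin.subset (Set.sep_subset _ _)).image _
  obtain ⟨_, ⟨⟨a, b⟩, ⟨hab, hb : b.card = m.2.card⟩, rfl⟩, hsource⟩ :=
    exists_forall_not_rel_of_transGen_irrefl hSfin ⟨m.1, m, ⟨hm, rfl⟩, rfl⟩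
      (hnc.transGen_vStep_irrefl hW)
  obtain ⟨haK, hbK, hface⟩ := hW.1 _ hab
  refine ⟨(a, b), hab, a, b, haK, hbK, hface, fun τ hτ haτ => ?_, rfl⟩
  have hcard : a.card < τ.card := Finset.card_lt_card haτ
  have hbcard : b.card = a.card + 1 := hface.2
  have hτcrit : τ ∉ criticalSimplices K W := fun h =>
    (((hlower h).2 haτ.subset haK).2 _ hab).1 rfl
  obtain ⟨⟨c, d⟩, hcd, (rfl : c = τ) | (rfl : d = τ)⟩ :=
    exists_pair_of_notMem_criticalSimplices hτ hτcrit
  · have hdcard : d.card = c.card + 1 := (hW.1 _ hcd).2.2.2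
    have hdmax : d.card ≤ m.2.card := hmax _ hcd
    lia
  · have hdmax : d.card ≤ m.2.card := hmax _ hcd
    have hd : d.card = m.2.card := by lia
    by_contra hdb
    have hac : a ≠ c := by
      rintro rfl
      exact hdb (congrArg Prod.snd (hW.eq_of_common_simplex hcd hab (.inl rfl) (.inl rfl)))
    exact hsource c ⟨(c, d), ⟨hcd, hd⟩, rfl⟩ ⟨d, hcd, ⟨haτ.subset, by lia⟩, hac⟩

theorem IsDVF.reflTransGen_elemCollapse (hW : IsDVF K W) (hnc : NoClosedVPath K W)
    (hfin : W.Finite) (hlower : IsRelLowerSet (criticalSimplices K W) (· ∈ K)) :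
    Relation.ReflTransGen ElemCollapse K (criticalSimplices K W) := by
  induction hn : W.ncard generalizing K W with
  | zero =>
    obtain rfl := (Set.ncard_eq_zero hfin).1 hn
    have hK : criticalSimplices K ∅ = K := by simp [criticalSimplices]
    rw [hK]
  | succ n ih =>
    have hne : W.Nonempty := Set.nonempty_of_ncard_ne_zero (by lia)
    obtain ⟨p, hp, hcollapse⟩ := hW.exists_elemCollapse hnc hfin hne hlower
    have hcrit := criticalSimplices_sdiff_pair (K := K) hp
    have hlower' : IsRelLowerSet (criticalSimplices (K \ {p.1, p.2}) (W \ {p}))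
        (· ∈ K \ {p.1, p.2}) := fun σ hσ =>
      ⟨hσ.1, fun τ hτσ hτ => hcrit.ge ((hlower (hcrit.le hσ)).2 hτσ hτ.1)⟩
    have hcard : (W \ {p}).ncard = n := by
      rw [Set.ncard_sdiff_singleton_of_mem hp, hn, Nat.add_sub_cancel]
    have hrest := ih (hW.sdiff_pair hp) (hnc.anti Set.sdiff_subset Set.sdiff_subset)
      hfin.sdiff hlower' hcard
    rw [hcrit] at hrest
    exact .head hcollapse hrest

theorem collapsible_of_unique_critical_vertex_general (hW : IsDVF K W)
    (hnc : NoClosedVPath K W) (hfin : W.Finite)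
    (hlower : IsRelLowerSet (criticalSimplices K W) (· ∈ K)) :
    ∃ n : ℕ, ∃ L : Fin (n + 1) → Set (Finset V),
      L 0 = K ∧
      (∀ i : Fin n, ElemCollapse (L i.castSucc) (L i.succ)) ∧
      L (Fin.last n) = criticalSimplices K W := by
  obtain ⟨s, hhead, hlast⟩ :=
    exists_relSeries_of_reflTransGen (hW.reflTransGen_elemCollapse hnc hfin hlower)
  exact ⟨s.length, s, hhead, s.step, hlast⟩

end DiscreteVectorField

/-- special case of Forman, Theorem 2.5: if a gradient vector field
on a finite complex `K` has exactly one critical simplex, a `0`-simplex, then `K`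
collapses to that single vertex by a finite sequence of elementary collapses. -/
theorem collapsible_of_unique_critical_vertex {V : Type*} (K : Set (Finset V))
    (hK : IsComplex K) (hfin : K.Finite)
    (W : Set (Finset V × Finset V)) (hW : IsDVF K W) (hnc : NoClosedVPath K W)
    (hcrit : ∃ x : V, {σ | σ ∈ K ∧ ∀ p ∈ W, p.1 ≠ σ ∧ p.2 ≠ σ} =
      {({x} : Finset V)}) :
    ∃ n : ℕ, ∃ L : Fin (n + 1) → Set (Finset V),
      L 0 = K ∧
      (∀ i : Fin n, ElemCollapse (L i.castSucc) (L i.succ)) ∧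
      ∃ x : V, L (Fin.last n) = {({x} : Finset V)} := by
  obtain ⟨x, hx : criticalSimplices K W = {{x}}⟩ := hcrit
  have hlower : IsRelLowerSet (criticalSimplices K W) (· ∈ K) := by
    rw [hx]
    rintro _ rfl
    exact ⟨(hx.ge rfl).1, fun τ hsub hτ => (hK.1 τ hτ).subset_singleton_iff.1 hsub⟩
  obtain ⟨n, L, hfirst, hstep, hlast⟩ :=
    collapsible_of_unique_critical_vertex_general hW hnc (hW.finite hfin) hlower
  exact ⟨n, L, hfirst, hstep, x, hlast.trans hx⟩
end
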